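/- arXiv:1808.05460 — 2 statements merged into one kernel-verified Lean document; each statement's English description precedes it below -/
import Mathlib

section
/- For every odd integer k ≥ 5 and every integer r ≥ 20k − 14, the interval [1,r] can be partitioned into exactly k pairwise disjoint MSTD subsets whose union is [1,r]. -/
/-!
Everything is built from Conway's MSTD set `C = {0, 2, 3, 4, 7, 11, 12, 14}`.

* Two copies of `C` far apart, `C ∪ (t + C)` with `t ≥ 29`, form an MSTD set: the sumset is a
  disjoint union of three translates of `C + C`, and the difference set is covered by three
  translates of `C - C`.
* For `n ≥ 49`, place one copy of `C` in `[0, n - 1]` at distance `2` from the left end and one at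
  distance `3` from the right end (`twin n`). What remains (`rest n`) is MSTD as well: it misses
  the two differences `±(n - 7)`, but of the sums in `[0, 2n - 2]` it misses only `5`.
  Hence every interval of length at least `49` splits into two MSTD sets
  (`splits_two`); length `40` works too, by computation.
* `[0, 27]` is the disjoint union of `C`, `13 + C` and a third set, all MSTD.

An interval of length at least `86` splits as `28 + (at least 58)`, giving `3 + 2` MSTD sets, and
each increase of `k` by `2` is absorbed by cutting off a block of length `40`.
-/

open Finset Pointwise

/-- A finite set of integers is MSTD (more-sums-than-differences) if `|A+A| > |A-A|`. -/
def MSTD (A : Finset ℤ) : Prop := (A - A).card < (A + A).card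

/-- `Splits k S`: the set `S` is a disjoint union of `k` MSTD sets. -/
def Splits (k : ℕ) (S : Finset ℤ) : Prop :=
  ∃ f : Fin k → Finset ℤ, (∀ i, MSTD (f i)) ∧
    (∀ i j, i ≠ j → Disjoint (f i) (f j)) ∧ Finset.univ.biUnion f = S

/-- Conway's MSTD set. -/
@[irreducible] def conway : Finset ℤ := {0, 2, 3, 4, 7, 11, 12, 14}

/-- Two copies of Conway's set in `[0, n - 1]`, with `2` free places on the left and `3` on the
right. -/
@[irreducible] def twin (n : ℤ) : Finset ℤ := ({2} + conway) ∪ ({n - 18} + conway)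

/-- The complement of `twin n` in `[0, n - 1]`. -/
@[irreducible] noncomputable def rest (n : ℤ) : Finset ℤ := Finset.Icc 0 (n - 1) \ twin n

/-! ### Gluing and translating partitions -/

lemma mem_singleton_add {x y : ℤ} {A : Finset ℤ} : y ∈ ({x} : Finset ℤ) + A ↔ y - x ∈ A := by
  rw [Finset.mem_add]
  constructor
  · rintro ⟨a, ha, b, hb, rfl⟩
    rw [Finset.mem_singleton] at ha
    subst ha
    simpa using hb
  · intro h
    exact ⟨x, Finset.mem_singleton_self x, y - x, h, by ring⟩

lemma shift_add_shift (x y : ℤ) (A : Finset ℤ) :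
    ({x} + A) + ({y} + A) = {x + y} + (A + A) := by
  rw [add_add_add_comm, singleton_add_singleton]

lemma shift_sub_shift (x y : ℤ) (A : Finset ℤ) :
    ({x} + A) - ({y} + A) = {x - y} + (A - A) := by
  rw [add_sub_add_comm, singleton_sub_singleton]

lemma MSTD.translate {A : Finset ℤ} (h : MSTD A) (x : ℤ) : MSTD ({x} + A) := by
  unfold MSTD at *
  rwa [shift_add_shift, shift_sub_shift, card_singleton_add, card_singleton_add]

lemma Splits.single {A : Finset ℤ} (h : MSTD A) : Splits 1 A :=
  ⟨fun _ => A, fun _ => h, fun i j hij => absurd (Subsingleton.elim i j) hij, by simp⟩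

lemma Splits.union {k l : ℕ} {S T : Finset ℤ} (hS : Splits k S) (hT : Splits l T)
    (hST : Disjoint S T) : Splits (k + l) (S ∪ T) := by
  obtain ⟨f, hf, hfd, rfl⟩ := hS
  obtain ⟨g, hg, hgd, rfl⟩ := hT
  have hfg : ∀ i j, Disjoint (f i) (g j) := fun i j =>
    hST.mono (subset_biUnion_of_mem f (mem_univ i)) (subset_biUnion_of_mem g (mem_univ j))
  refine ⟨Fin.append f g, fun i => ?_, fun i j => ?_, ?_⟩
  · induction i using Fin.addCases <;> simp [hf, hg]
  · induction i using Fin.addCases <;> induction j using Fin.addCases <;> intro hij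
    · simpa using hfd _ _ (by rintro rfl; exact hij rfl)
    · simpa using hfg _ _
    · simpa using (hfg _ _).symm
    · simpa using hgd _ _ (by rintro rfl; exact hij rfl)
  · ext x
    simp only [mem_biUnion, mem_univ, true_and, mem_union]
    constructor
    · rintro ⟨i, hi⟩
      induction i using Fin.addCases with
      | left i => exact Or.inl ⟨i, by simpa using hi⟩
      | right i => exact Or.inr ⟨i, by simpa using hi⟩
    · rintro (⟨i, hi⟩ | ⟨i, hi⟩)
      · exact ⟨Fin.castAdd l i, by simpa using hi⟩
      · exact ⟨Fin.natAdd k i, by simpa using hi⟩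

lemma Splits.of_parts {k : ℕ} {S : Finset ℤ} (f : Fin k → Finset ℤ) (h1 : ∀ i, MSTD (f i))
    (h2 : ∀ i j, i ≠ j → Disjoint (f i) (f j)) (h3 : Finset.univ.biUnion f = S) : Splits k S :=
  ⟨f, h1, h2, h3⟩

lemma Splits.translate {k : ℕ} {S : Finset ℤ} (h : Splits k S) (x : ℤ) : Splits k ({x} + S) := by
  obtain ⟨f, hf, hfd, hS⟩ := h
  refine Splits.of_parts (fun i => {x} + f i) ?_ ?_ ?_
  · exact fun i => MSTD.translate (hf i) x
  · intro i j hij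
    rw [disjoint_left]
    intro y
    rw [mem_singleton_add, mem_singleton_add]
    exact fun h => disjoint_left.1 (hfd i j hij) h
  · rw [← hS]
    ext y
    simp only [mem_singleton_add, mem_biUnion, mem_univ, true_and]

lemma singleton_add_Icc (x a b : ℤ) :
    ({x} : Finset ℤ) + Finset.Icc a b = Finset.Icc (x + a) (x + b) := by
  ext y
  rw [mem_singleton_add, Finset.mem_Icc, Finset.mem_Icc]
  omega

/-! ### Finite blocks -/

lemma conway_mstd : MSTD conway := by
  unfold MSTD; decide +kernel

lemma twin_forty_mstd : MSTD (twin 40) := by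
  unfold MSTD; decide +kernel

lemma rest_forty_mstd : MSTD (rest 40) := by
  unfold MSTD; decide +kernel

lemma splits_three : Splits 3 (Finset.Icc 0 27) := by
  have h3 : MSTD (Finset.Icc 0 27 \ (conway ∪ ({13} + conway))) := by
    unfold MSTD; decide +kernel
  have h := ((Splits.single conway_mstd).union (Splits.single (conway_mstd.translate 13))
    (by decide +kernel)).union (Splits.single h3) disjoint_sdiff
  rwa [union_sdiff_of_subset (by decide +kernel)] at h

/-! ### Long intervals as two MSTD sets -/

lemma mem_conway {x : ℤ} : x ∈ conway ↔
    x = 0 ∨ x = 2 ∨ x = 3 ∨ x = 4 ∨ x = 7 ∨ x = 11 ∨ x = 12 ∨ x = 14 := by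
  simp [conway]

lemma mem_twin {n x : ℤ} : x ∈ twin n ↔ x - 2 ∈ conway ∨ x - (n - 18) ∈ conway := by
  rw [twin, mem_union, mem_singleton_add, mem_singleton_add]

lemma twin_subset {n : ℤ} (hn : 18 ≤ n) : twin n ⊆ Finset.Icc 0 (n - 1) := by
  rw [Finset.subset_iff]
  intro x hx
  simp only [mem_twin, mem_conway] at hx
  rw [Finset.mem_Icc]
  omega

/-- Since `n - 20 ≥ 29` exceeds the diameter `28` of `C + C`, the three translates of `C + C`
making up the sumset do not overlap. -/
lemma twin_mstd {n : ℤ} (hn : 49 ≤ n) : MSTD (twin n) := by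
  have hsum : twin n + twin n = (({4} + (conway + conway)) ∪ ({n - 16} + (conway + conway))) ∪
      ({2 * n - 36} + (conway + conway)) := by
    simp only [twin, add_union, union_add, shift_add_shift]
    rw [show n - 18 + 2 = n - 16 by ring, show (2 : ℤ) + (n - 18) = n - 16 by ring,
      show n - 18 + (n - 18) = 2 * n - 36 by ring, show (2 : ℤ) + 2 = 4 by norm_num]
    rw [← union_assoc, union_assoc _ ({n - 16} + _) ({n - 16} + _), union_self]
  have hdiff : twin n - twin n ⊆ (({0} + (conway - conway)) ∪ ({n - 20} + (conway - conway))) ∪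
      ({20 - n} + (conway - conway)) := by
    simp only [twin, sub_union, union_sub, shift_sub_shift, sub_self]
    rw [show n - 18 - 2 = n - 20 by ring, show (2 : ℤ) - (n - 18) = 20 - n by ring]
    rw [← union_assoc, union_comm _ ({0} + _), ← union_assoc, ← union_assoc, union_self]
  have hb : ∀ x ∈ conway + conway, 0 ≤ x ∧ x ≤ 28 := by decide +kernel
  have hmem : ∀ c x : ℤ, x ∈ ({c} : Finset ℤ) + (conway + conway) → c ≤ x ∧ x ≤ c + 28 := by
    intro c x hx
    have := hb _ (mem_singleton_add.1 hx)
    omega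
  have h1 : (twin n + twin n).card = 3 * (conway + conway).card := by
    rw [hsum, card_union_of_disjoint, card_union_of_disjoint]
    · simp only [card_singleton_add]; ring
    · refine disjoint_left.2 fun x hx hy => ?_
      have := hmem _ _ hx
      have := hmem _ _ hy
      omega
    · refine disjoint_left.2 fun x hx hy => ?_
      have := hmem _ _ hy
      rcases mem_union.1 hx with hx | hx
      all_goals
        have := hmem _ _ hx
        omega
  have h2 : (twin n - twin n).card ≤ 3 * (conway - conway).card := by
    refine (card_le_card hdiff).trans ((card_union_le _ _).trans ?_)
    have := card_union_le (({0} : Finset ℤ) + (conway - conway)) ({n - 20} + (conway - conway))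
    simp only [card_singleton_add] at *
    omega
  have h3 := conway_mstd
  unfold MSTD at *
  omega

lemma mem_rest {n x : ℤ} : x ∈ rest n ↔
    (0 ≤ x ∧ x ≤ n - 1) ∧ ¬ (x - 2 ∈ conway ∨ x - (n - 18) ∈ conway) := by
  rw [rest, mem_sdiff, Finset.mem_Icc, mem_twin]

/-- Left and right fringe (the latter measured from the right end) realise all required sums near
the two ends. -/
lemma fringe_sums :
    (∀ s ∈ Finset.Icc (0 : ℤ) 33, s ≠ 5 → ∃ a ∈ Finset.Icc (0 : ℤ) 30, ∃ b ∈ Finset.Icc (0 : ℤ) 30,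
      a - 2 ∉ conway ∧ b - 2 ∉ conway ∧ a + b = s) ∧
    (∀ s ∈ Finset.Icc (0 : ℤ) 35, ∃ a ∈ Finset.Icc (0 : ℤ) 31, ∃ b ∈ Finset.Icc (0 : ℤ) 31,
      17 - a ∉ conway ∧ 17 - b ∉ conway ∧ a + b = s) := by
  decide +kernel

lemma rest_mstd {n : ℤ} (hn : 49 ≤ n) : MSTD (rest n) := by
  have hdiff : rest n - rest n ⊆ Finset.Icc (1 - n) (n - 1) \ {n - 7, 7 - n} := by
    rw [Finset.subset_iff]
    intro x hx
    rw [Finset.mem_sub] at hx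
    obtain ⟨a, ha, b, hb, rfl⟩ := hx
    simp only [mem_rest, mem_conway] at ha hb
    simp only [mem_sdiff, Finset.mem_Icc, mem_insert, mem_singleton]
    omega
  have hsum : Finset.Icc 0 (2 * n - 2) \ {5} ⊆ rest n + rest n := by
    rw [Finset.subset_iff]
    intro s hs
    simp only [mem_sdiff, Finset.mem_Icc, mem_singleton] at hs
    rw [mem_add]
    -- everything in `[17, n - 19]` belongs to `rest n`
    have hmid : ∀ x, 17 ≤ x → x ≤ n - 19 → x ∈ rest n := by
      intro x h1 h2
      simp only [mem_rest, mem_conway]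
      omega
    rcases le_or_gt s 33 with h | h
    · obtain ⟨a, ha, b, hb, hac, hbc, rfl⟩ := fringe_sums.1 s (Finset.mem_Icc.2 ⟨hs.1.1, h⟩) hs.2
      rw [Finset.mem_Icc] at ha hb
      refine ⟨a, ?_, b, ?_, rfl⟩ <;>
      · simp only [mem_rest, mem_conway] at *
        omega
    rcases le_or_gt s (2 * n - 38) with h' | h'
    · rcases le_or_gt s (n - 2) with h'' | h''
      · exact ⟨17, hmid _ (by omega) (by omega), s - 17, hmid _ (by omega) (by omega), by ring⟩
      · exact ⟨n - 19, hmid _ (by omega) (by omega), s - (n - 19), hmid _ (by omega) (by omega),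
          by ring⟩
    · obtain ⟨a, ha, b, hb, hac, hbc, hab⟩ :=
        fringe_sums.2 (2 * n - 2 - s) (Finset.mem_Icc.2 ⟨by omega, by omega⟩)
      rw [Finset.mem_Icc] at ha hb
      refine ⟨n - 1 - a, ?_, n - 1 - b, ?_, by omega⟩ <;>
      · simp only [mem_rest, mem_conway] at *
        omega
  have h1 := card_le_card hdiff
  have h2 := card_le_card hsum
  rw [card_sdiff_of_subset, Int.card_Icc, card_pair (by omega)] at h1
  · rw [card_sdiff_of_subset, Int.card_Icc, card_singleton] at h2
    · unfold MSTD
      omega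
    · rw [Finset.subset_iff]
      intro x hx
      simp only [mem_singleton, Finset.mem_Icc] at *
      omega
  · rw [Finset.subset_iff]
    intro x hx
    simp only [mem_singleton, mem_insert, Finset.mem_Icc] at *
    omega

lemma splits_twin_rest {n : ℤ} (hn : 18 ≤ n) (h1 : MSTD (twin n)) (h2 : MSTD (rest n)) :
    Splits 2 (Finset.Icc 0 (n - 1)) := by
  have h := (Splits.single h1).union (Splits.single h2) (by rw [rest]; exact disjoint_sdiff)
  rwa [rest, union_sdiff_of_subset (twin_subset hn)] at h

lemma splits_two {n : ℤ} (hn : 49 ≤ n) : Splits 2 (Finset.Icc 0 (n - 1)) :=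
  splits_twin_rest (by omega) (twin_mstd hn) (rest_mstd hn)

/-! ### Assembling the partition -/

lemma Splits.extend {k l : ℕ} {m n : ℤ} (hm : 0 ≤ m) (hn : 0 ≤ n) (h : Splits k (Finset.Icc 1 m))
    (h' : Splits l (Finset.Icc 0 (n - 1))) : Splits (k + l) (Finset.Icc 1 (m + n)) := by
  have h'' := h'.translate (m + 1)
  rw [singleton_add_Icc] at h''
  have hu := h.union h'' (disjoint_left.2 fun x hx hy => by
    rw [Finset.mem_Icc] at hx hy; omega)
  convert hu using 1
  ext x
  simp only [mem_union, Finset.mem_Icc]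
  omega

lemma splits_odd (j : ℕ) (r : ℤ) (hr : 40 * (j : ℤ) + 86 ≤ r) :
    Splits (2 * j + 5) (Finset.Icc 1 r) := by
  induction j generalizing r with
  | zero =>
    have h3 := splits_three.translate 1
    rw [singleton_add_Icc] at h3
    have h := Splits.extend (m := 28) (n := r - 28) (by omega) (by omega) h3
      (splits_two (by push_cast at hr; omega))
    rwa [show 28 + (r - 28) = r by ring] at h
  | succ j ih =>
    push_cast at hr
    have h := Splits.extend (m := r - 40) (n := 40) (by omega) (by omega) (ih (r - 40) (by omega))
      (splits_twin_rest (by omega) twin_forty_mstd rest_forty_mstd)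
    rwa [show r - 40 + 40 = r by ring, show 2 * j + 5 + 2 = 2 * (j + 1) + 5 by ring] at h

theorem stmt10 (k : ℕ) (hk : 5 ≤ k) (hkodd : Odd k) (r : ℤ)
    (hr : 20 * (k : ℤ) - 14 ≤ r) :
    ∃ f : Fin k → Finset ℤ, (∀ i, MSTD (f i)) ∧
      (∀ i j, i ≠ j → Disjoint (f i) (f j)) ∧
      Finset.univ.biUnion f = Finset.Icc 1 r := by
  obtain ⟨j, rfl⟩ : ∃ j, k = 2 * j + 5 := by
    obtain ⟨i, rfl⟩ := hkodd
    exact ⟨i - 2, by omega⟩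
  exact splits_odd j r (by push_cast at hr; omega)
end

section
/- Let T be a positive integer and suppose there exists a finite set A ⊆ [1,T] of positive integers with max A = T and |A+A| − |A−A| ≥ 10|A|. Then for every integer r ≥ 4T + 24, the interval [1,r] can be partitioned into exactly three pairwise disjoint MSTD subsets whose union is [1,r]. -/
/-!
The strong set `A` is translated into a window `[w+1, w+T]` with `w = T + 24`, which leaves an initial
segment `[1, w]` and a final segment `[w+T+1, r]`. A translate of `A` is MSTD, so it remains to
split the two segments (and the unused part of the window) into two MSTD sets `C` and `D`.

Away from the ends `1` and `r`, the set `C` consists of the integers at distance `x` (counted from `0` on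
the left, from `r + 1` on the right) with `x mod 8 ∈ {1, 2, 4, 5}`, and `D` of the
complementary classes `{0, 3, 6, 7}`. Both systems of residues have all of `ℤ/8` as sumset and as
difference set, so the sums left+left, left+right, right+right cover everything except a bounded
range near `2` and near `2r`, whatever happens in the window; the segments are long enough compared
with the window for the three ranges to overlap (`mstd_of_fringe`).

Near the ends, the fringes `leftFringe`, `rightFringe` and their complements are chosen such that the
sums missing at the two ends are fewer than the missing differences near `±(r-1)`:
for `C` the sums miss 3 values and the differences 4, for `D` they miss 9 and 10.

The only use of the strength of `A`, besides its being MSTD, is that it forces `T ≥ 24`.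
-/

open Finset Pointwise

/-- Positions, counted from `0`, of the elements of `C` in the initial segment. -/
def leftFringe (x : ℤ) : Prop :=
  x = 1 ∨ x = 2 ∨ x = 5 ∨ x = 7 ∨
    (9 ≤ x ∧ (x % 8 = 1 ∨ x % 8 = 2 ∨ x % 8 = 4 ∨ x % 8 = 5))

/-- Positions, counted backwards from `r + 1`, of the elements of `C` in the final segment. -/
def rightFringe (x : ℤ) : Prop :=
  x = 1 ∨ x = 2 ∨ x = 5 ∨ x = 8 ∨
    (10 ≤ x ∧ (x % 8 = 1 ∨ x % 8 = 2 ∨ x % 8 = 4 ∨ x % 8 = 5))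

instance : DecidablePred leftFringe := fun x => by unfold leftFringe; infer_instance

instance : DecidablePred rightFringe := fun x => by unfold rightFringe; infer_instance

/-- A sum of two intervals of length at least 8 is still covered, up to 7 elements at each end, when
the first summand is restricted to a residue class modulo 8. -/
lemma exists_residue_split {p₁ p₂ q₁ q₂ s : ℤ} (a : ℤ) (hp : p₁ + 7 ≤ p₂) (hq : q₁ + 7 ≤ q₂)
    (h₁ : p₁ + q₁ + 7 ≤ s) (h₂ : s ≤ p₂ + q₂ - 7) :
    ∃ x k, x = a + 8 * k ∧ p₁ ≤ x ∧ x ≤ p₂ ∧ q₁ ≤ s - x ∧ s - x ≤ q₂ := by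
  -- the least element of the class which is at least `max p₁ (s - q₂)`
  rcases le_total p₁ (s - q₂) with h | h
  · exact ⟨s - q₂ + (a - (s - q₂)) % 8, -((a - (s - q₂)) / 8), by omega, by omega, by omega,
      by omega, by omega⟩
  · exact ⟨p₁ + (a - p₁) % 8, -((a - p₁) / 8), by omega, by omega, by omega, by omega, by omega⟩

/-- Criterion for MSTD. The set `G ⊆ [1, r]` is described by `p` on `[1, w]` and, reflected, by `q` on
`[w+T+1, r]`, and is arbitrary in between. From position 10 on, `p` and `q` contain a system `S` of
classes modulo 8 whose sums and differences represent all residues. The sums near `2` and `2r` miss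
at most the values recorded in `M` and `N`, and the values in `K` are not of the form `x + y` with `p x`
and `q y`, so that they give missing differences. -/
lemma mstd_of_fringe (p q S : ℤ → Prop) (T w r : ℤ) (hT : 24 ≤ T) (hw : w = T + 24)
    (hr : 4 * T + 24 ≤ r) (G : Finset ℤ) (hG : G ⊆ Icc 1 r)
    (hp : ∀ x, 1 ≤ x → x ≤ w → (x ∈ G ↔ p x))
    (hq : ∀ x, 1 ≤ x → x ≤ r - w - T → (r + 1 - x ∈ G ↔ q x))
    (hSp : ∀ x, 10 ≤ x → S x → p x) (hSq : ∀ x, 10 ≤ x → S x → q x)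
    (hper : ∀ x k, S x → S (x + 8 * k))
    (hadd : ∀ c, ∃ a, S a ∧ S (c - a)) (hsub : ∀ c, ∃ a, S a ∧ S (a + c))
    (M N K : Finset ℤ)
    (hM : ∀ s ∈ Icc (2 : ℤ) 26, s ∉ M → ∃ x ∈ Icc (1 : ℤ) 25, x < s ∧ p x ∧ p (s - x))
    (hN : ∀ s ∈ Icc (2 : ℤ) 26, s ∉ N → ∃ x ∈ Icc (1 : ℤ) 25, x < s ∧ q x ∧ q (s - x))
    (hK : K ⊆ Icc 2 20)
    (hKm : ∀ t ∈ K, ∀ x ∈ Icc (1 : ℤ) 20, x < t → p x → ¬ q (t - x))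
    (hcard : M.card + N.card < 2 * K.card) : MSTD G := by
  have hsum : Icc 2 (2 * r) \ (M ∪ N.image (fun t => 2 * r + 2 - t)) ⊆ G + G := by
    intro s hs
    simp only [mem_sdiff, mem_Icc, mem_union, mem_image, not_or, not_exists, not_and] at hs
    obtain ⟨⟨hs1, hs2⟩, hsM, hsN⟩ := hs
    have key : ∃ x ∈ G, s - x ∈ G := by
      by_cases c1 : s ≤ 26
      · obtain ⟨x, hx, hxs, h1, h2⟩ := hM s (mem_Icc.2 ⟨hs1, c1⟩) hsM
        rw [mem_Icc] at hx
        exact ⟨x, (hp x (by omega) (by omega)).2 h1, (hp _ (by omega) (by omega)).2 h2⟩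
      by_cases c2 : s ≤ 2 * w - 7
      · obtain ⟨a, ha, hb⟩ := hadd s
        obtain ⟨x, k, hxk, h1, h2, h3, h4⟩ := exists_residue_split (p₁ := 10) (p₂ := w)
          (q₁ := 10) (q₂ := w) (s := s) a (by omega) (by omega) (by omega) (by omega)
        refine ⟨x, (hp x (by omega) h2).2 (hSp x h1 ?_),
          (hp _ (by omega) h4).2 (hSp _ h3 ?_)⟩
        · rw [hxk]; exact hper _ _ ha
        · rw [show s - x = s - a + 8 * (-k) by omega]; exact hper _ _ hb
      by_cases c3 : s ≤ w + (r - 9) - 7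
      · obtain ⟨a, ha, hb⟩ := hsub (r + 1 - s)
        obtain ⟨x, k, hxk, h1, h2, h3, h4⟩ := exists_residue_split (p₁ := 10) (p₂ := w)
          (q₁ := w + T + 1) (q₂ := r - 9) (s := s) a (by omega) (by omega) (by omega) (by omega)
        refine ⟨x, (hp x (by omega) h2).2 (hSp x h1 ?_), ?_⟩
        · rw [hxk]; exact hper _ _ ha
        · rw [show s - x = r + 1 - (r + 1 - s + x) by omega]
          refine (hq _ (by omega) (by omega)).2 (hSq _ (by omega) ?_)
          rw [show r + 1 - s + x = a + (r + 1 - s) + 8 * k by omega]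
          exact hper _ _ hb
      by_cases c4 : s ≤ 2 * (r - 9) - 7
      · obtain ⟨a, ha, hb⟩ := hadd (2 * r + 2 - s)
        obtain ⟨x, k, hxk, h1, h2, h3, h4⟩ := exists_residue_split (p₁ := 10) (p₂ := r - w - T)
          (q₁ := 10) (q₂ := r - w - T) (s := 2 * r + 2 - s) a
          (by omega) (by omega) (by omega) (by omega)
        refine ⟨r + 1 - x, (hq x (by omega) h2).2 (hSq x h1 ?_), ?_⟩
        · rw [hxk]; exact hper _ _ ha
        · rw [show s - (r + 1 - x) = r + 1 - (2 * r + 2 - s - x) by omega]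
          refine (hq _ (by omega) h4).2 (hSq _ h3 ?_)
          rw [show 2 * r + 2 - s - x = 2 * r + 2 - s - a + 8 * (-k) by omega]
          exact hper _ _ hb
      · obtain ⟨x, hx, hxs, h1, h2⟩ := hN (2 * r + 2 - s) (mem_Icc.2 (by omega))
          (fun h => hsN _ h (by omega))
        rw [mem_Icc] at hx
        refine ⟨r + 1 - x, (hq x (by omega) (by omega)).2 h1, ?_⟩
        rw [show s - (r + 1 - x) = r + 1 - (2 * r + 2 - s - x) by omega]
        exact (hq _ (by omega) (by omega)).2 h2
    obtain ⟨x, hx, hy⟩ := key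
    exact mem_add.2 ⟨x, hx, s - x, hy, by omega⟩
  have hKd : ∀ t ∈ K, ∀ x ∈ G, ∀ y ∈ G, y - x ≠ r + 1 - t := by
    intro t ht x hx y hy h
    have h1 := mem_Icc.1 (hK ht)
    have h2 := mem_Icc.1 (hG hx)
    have h3 := mem_Icc.1 (hG hy)
    refine hKm t ht x (mem_Icc.2 (by omega)) (by omega) ((hp x (by omega) (by omega)).1 hx) ?_
    refine (hq _ (by omega) (by omega)).1 ?_
    rwa [show r + 1 - (t - x) = y by omega]
  have hdiff : G - G ⊆ Icc (1 - r) (r - 1) \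
      (K.image (fun t => r + 1 - t) ∪ K.image (fun t => t - (r + 1))) := by
    intro d hd
    obtain ⟨y, hy, x, hx, rfl⟩ := mem_sub.1 hd
    have h2 := mem_Icc.1 (hG hx)
    have h3 := mem_Icc.1 (hG hy)
    simp only [mem_sdiff, mem_Icc, mem_union, mem_image, not_or, not_exists, not_and]
    refine ⟨by omega, fun t ht h => hKd t ht x hx y hy (by omega),
      fun t ht h => hKd t ht y hy x hx (by omega)⟩
  have h1 := card_le_card hsum
  have h2 := card_le_card hdiff
  have h3 := le_card_sdiff (M ∪ N.image (fun t => 2 * r + 2 - t)) (Icc 2 (2 * r))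
  have h4 := card_union_le M (N.image (fun t => 2 * r + 2 - t))
  have h5 : (N.image (fun t => 2 * r + 2 - t)).card ≤ N.card := card_image_le
  have h6 : (K.image (fun t => r + 1 - t) ∪ K.image (fun t => t - (r + 1))).card
      = 2 * K.card := by
    rw [card_union_of_disjoint, card_image_of_injective, card_image_of_injective]
    · omega
    · intro a b h; simpa using h
    · intro a b h; simpa using h
    · rw [disjoint_left]
      simp only [mem_image, not_exists, not_and]
      rintro _ ⟨t, ht, rfl⟩ u hu h
      have h1 := mem_Icc.1 (hK ht)
      have h2 := mem_Icc.1 (hK hu)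
      omega
  rw [card_sdiff_of_subset, h6] at h2
  · -- bounds `K.card`, so that the subtraction from `2r - 1` in `h2` does not truncate
    have h7 := card_le_card hK
    simp only [Int.card_Icc] at h1 h2 h3 h7
    unfold MSTD
    omega
  · intro d
    simp only [mem_union, mem_image, mem_Icc]
    rintro (⟨t, ht, rfl⟩ | ⟨t, ht, rfl⟩) <;> have h1 := mem_Icc.1 (hK ht) <;> omega

/-- A 10-strong set cannot live in a short interval: `11|A| ≤ |A+A| ≤ min (|A|²) (2T-1)`. -/
lemma le_of_strong (T : ℤ) (A : Finset ℤ) (hA : A ⊆ Icc 1 T) (hne : A.Nonempty)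
    (hstrong : (A - A).card + 10 * A.card ≤ (A + A).card) : 24 ≤ T := by
  have h1 : A.card ≤ (A - A).card := card_le_card_sub_right hne
  have h2 : (A + A).card ≤ A.card * A.card := card_add_le
  have h3 : A + A ⊆ Icc 2 (2 * T) := by
    intro s hs
    obtain ⟨x, hx, y, hy, rfl⟩ := mem_add.1 hs
    have h2 := mem_Icc.1 (hA hx)
    have h3 := mem_Icc.1 (hA hy)
    exact mem_Icc.2 (by omega)
  have h4 := card_le_card h3
  rw [Int.card_Icc] at h4
  have h5 : 0 < A.card := hne.card_pos
  have h6 : 11 ≤ A.card := by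
    by_contra hlt
    have : A.card * A.card ≤ 10 * A.card := Nat.mul_le_mul_right _ (by omega)
    omega
  omega

lemma mstd_add_singleton (A : Finset ℤ) (w : ℤ) (h : MSTD A) : MSTD (A + {w}) := by
  unfold MSTD at *
  rw [add_sub_add_comm, add_add_add_comm, singleton_sub_singleton, singleton_add_singleton,
    card_add_singleton, card_add_singleton]
  exact h

theorem stmt12 (T : ℤ) (hT : 0 < T) (A : Finset ℤ)
    (hA : A ⊆ Finset.Icc 1 T) (hTmem : T ∈ A)
    (hstrong : (A - A).card + 10 * A.card ≤ (A + A).card)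
    (r : ℤ) (hr : 4 * T + 24 ≤ r) :
    ∃ B C D : Finset ℤ, MSTD B ∧ MSTD C ∧ MSTD D ∧
      Disjoint B C ∧ Disjoint B D ∧ Disjoint C D ∧
      B ∪ C ∪ D = Finset.Icc 1 r := by
  have hT24 := le_of_strong T A hA ⟨T, hTmem⟩ hstrong
  have hApos : 0 < A.card := card_pos.2 ⟨T, hTmem⟩
  obtain ⟨w, hw⟩ : ∃ w, w = T + 24 := ⟨_, rfl⟩
  let B : Finset ℤ := A + {w}
  have hB : ∀ x ∈ B, w + 1 ≤ x ∧ x ≤ w + T := by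
    intro x hx
    obtain ⟨a, ha, b, hb, rfl⟩ := mem_add.1 hx
    have := mem_Icc.1 (hA ha)
    have := mem_singleton.1 hb
    omega
  let C : Finset ℤ := (Icc 1 r).filter
    (fun x => (x ≤ w ∧ leftFringe x) ∨ (w + T < x ∧ rightFringe (r + 1 - x)))
  have hC : ∀ x, x ∈ C ↔ (1 ≤ x ∧ x ≤ r) ∧
      ((x ≤ w ∧ leftFringe x) ∨ (w + T < x ∧ rightFringe (r + 1 - x))) := by
    intro x
    simp only [C, mem_filter, mem_Icc]
  have hBC : Disjoint B C := by
    rw [disjoint_left]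
    intro x hx hx'
    have := hB x hx
    rcases ((hC x).1 hx').2 with h | h <;> omega
  have hBCsub : B ∪ C ⊆ Icc 1 r := by
    intro x hx
    rcases mem_union.1 hx with hx | hx
    · have := hB x hx
      exact mem_Icc.2 (by omega)
    · exact mem_Icc.2 ((hC x).1 hx).1
  have hCl : ∀ x, 1 ≤ x → x ≤ w → (x ∈ C ↔ leftFringe x) := by
    intro x h1 h2
    rw [hC]
    constructor
    · rintro ⟨-, h | h⟩
      · exact h.2
      · omega
    · exact fun h => ⟨by omega, Or.inl ⟨h2, h⟩⟩
  have hCr : ∀ x, 1 ≤ x → x ≤ r - w - T → (r + 1 - x ∈ C ↔ rightFringe x) := by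
    intro x h1 h2
    rw [hC, show r + 1 - (r + 1 - x) = x by omega]
    constructor
    · rintro ⟨-, h | h⟩
      · omega
      · exact h.2
    · exact fun h => ⟨by omega, Or.inr ⟨by omega, h⟩⟩
  have hD : ∀ x, x ∈ Icc 1 r \ (B ∪ C) ↔ (1 ≤ x ∧ x ≤ r) ∧ x ∉ B ∧ x ∉ C := by
    intro x
    simp only [mem_sdiff, mem_union, mem_Icc, not_or]
  refine ⟨B, C, Icc 1 r \ (B ∪ C), ?_, ?_, ?_, hBC, ?_, ?_, union_sdiff_of_subset hBCsub⟩
  · exact mstd_add_singleton A w (by unfold MSTD; omega)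
  · refine mstd_of_fringe leftFringe rightFringe
      (fun x => x % 8 = 1 ∨ x % 8 = 2 ∨ x % 8 = 4 ∨ x % 8 = 5) T w r hT24 hw hr C
      (filter_subset _ _) hCl hCr ?_ ?_ ?_ ?_ ?_ {5} {5, 8} {5, 16} ?_ ?_ ?_ ?_ ?_
    · intro x h1 h2
      unfold leftFringe
      omega
    · intro x h1 h2
      unfold rightFringe
      omega
    · intro x k h
      omega
    · -- one of the four classes works as `a`, whatever `c` is modulo 8
      intro c
      by_contra hcon
      push Not at hcon
      have := hcon 1
      have := hcon 2
      have := hcon 4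
      have := hcon 5
      omega
    · -- one of the four classes works as `a`, whatever `c` is modulo 8
      intro c
      by_contra hcon
      push Not at hcon
      have := hcon 1
      have := hcon 2
      have := hcon 4
      have := hcon 5
      omega
    all_goals decide +kernel
  · refine mstd_of_fringe (fun x => ¬ leftFringe x) (fun x => ¬ rightFringe x)
      (fun x => x % 8 = 0 ∨ x % 8 = 3 ∨ x % 8 = 6 ∨ x % 8 = 7) T w r hT24 hw hr _
      sdiff_subset ?_ ?_ ?_ ?_ ?_ ?_ ?_
      {2, 3, 4, 5, 13} {2, 3, 4, 5} {2, 3, 4, 5, 16} ?_ ?_ ?_ ?_ ?_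
    · intro x h1 h2
      rw [hD, hCl x h1 h2]
      exact ⟨fun h => h.2.2, fun h => ⟨by omega, fun hx => by have := hB x hx; omega, h⟩⟩
    · intro x h1 h2
      rw [hD, hCr x h1 h2]
      exact ⟨fun h => h.2.2, fun h => ⟨by omega, fun hx => by have := hB _ hx; omega, h⟩⟩
    · intro x h1 h2
      unfold leftFringe
      omega
    · intro x h1 h2
      unfold rightFringe
      omega
    · intro x k h
      omega
    · -- one of the four classes works as `a`, whatever `c` is modulo 8
      intro c
      by_contra hcon
      push Not at hcon
      have := hcon 0
      have := hcon 3
      have := hcon 6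
      have := hcon 7
      omega
    · -- one of the four classes works as `a`, whatever `c` is modulo 8
      intro c
      by_contra hcon
      push Not at hcon
      have := hcon 0
      have := hcon 3
      have := hcon 6
      have := hcon 7
      omega
    all_goals decide +kernel
  · exact disjoint_sdiff.mono_left subset_union_left
  · exact disjoint_sdiff.mono_left subset_union_right
end
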